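/- Let A, B be real numbers with −1 < B < A ≤ 1 satisfying: A ≤ 1 − √(2/(1+e²))·(1−B) if (1−AB)/(1−B²) ≤ (1+e)/√(2(1+e²)), and A ≤ e·√(2/(1+e²))·(1+B) − 1 if (1−AB)/(1−B²) ≥ (1+e)/√(2(1+e²)). If p is analytic on 𝔻 and p ≺ (1+Az)/(1+Bz), then p ≺ 𝔅. (In class language: under these conditions on A and B, 𝒮*[A,B] ⊂ 𝒮*_𝔅.) -/

import Mathlib

open Complex Metric

/-- The bean function 𝔅(z) = (1 + tanh z)^(1/2), principal branch of the complex power. -/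
noncomputable def Bean (z : ℂ) : ℂ := (1 + Complex.tanh z) ^ ((1:ℂ)/2)

/-- The open unit disk in ℂ. -/
def unitDisk : Set ℂ := Metric.ball (0:ℂ) 1

/-- `Subord p g` : p is subordinate to g on the unit disk. -/
def Subord (p g : ℂ → ℂ) : Prop :=
  ∃ ω : ℂ → ℂ, AnalyticOnNhd ℂ ω unitDisk ∧ ω 0 = 0 ∧
    (∀ z ∈ unitDisk, ‖ω z‖ < 1) ∧ ∀ z ∈ unitDisk, p z = g (ω z)

/-!
The bean region contains the disk whose diameter is the segment from `𝔅(-1)` to `𝔅(1)`, and the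
conditions on `A` and `B` say that the disk `{(1 + Az)/(1 + Bz) : |z| < 1}` lies in it; one then
subordinates with `ω = 𝔅⁻¹ ∘ p`.

With `ζ = 𝔅⁻¹(w) = log (w² / (2 - w²)) / 2 = u + iv`, the disk inequality for `w` becomes, through
`8 (Re w)² = (|w|² + 2)² - |2 - w²|²` and the triangle inequality `2 ≤ |w|² + |2 - w²|`, the
inequality `(sinh² 1 + cosh 1) sin² v + sinh² u < sinh² 1`. Comparing `sin² v` with `v²` and
`sinh² 1 - sinh² u` with `1 - u²` turns it into `u² + v² < 1`.
-/

lemma sinh_le_self_mul_cosh {x : ℝ} (hx : 0 ≤ x) : Real.sinh x ≤ x * Real.cosh x := by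
  have h := (convex_Icc 0 x).image_sub_le_mul_sub_of_deriv_le (C := Real.cosh x)
    Real.continuous_sinh.continuousOn Real.differentiable_sinh.differentiableOn
    (fun t ht ↦ by
      rw [interior_Icc] at ht
      rw [Real.deriv_sinh, Real.cosh_le_cosh, abs_of_pos ht.1, abs_of_nonneg hx]
      exact ht.2.le)
    0 (Set.left_mem_Icc.2 hx) x (Set.right_mem_Icc.2 hx) hx
  simpa [mul_comm] using h

lemma add_mul_sinh_mul_sinh_le {a b : ℝ} (ha : 0 ≤ a) (hb : 0 ≤ b) :
    (a + b) * (Real.sinh a * Real.sinh b) ≤ a * b * Real.sinh (a + b) := by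
  have hsa : 0 ≤ a * Real.sinh a := mul_nonneg ha (Real.sinh_nonneg_iff.2 ha)
  have hsb : 0 ≤ b * Real.sinh b := mul_nonneg hb (Real.sinh_nonneg_iff.2 hb)
  calc (a + b) * (Real.sinh a * Real.sinh b)
      = a * Real.sinh a * Real.sinh b + b * Real.sinh b * Real.sinh a := by ring
    _ ≤ a * Real.sinh a * (b * Real.cosh b) + b * Real.sinh b * (a * Real.cosh a) :=
        add_le_add (mul_le_mul_of_nonneg_left (sinh_le_self_mul_cosh hb) hsa)
          (mul_le_mul_of_nonneg_left (sinh_le_self_mul_cosh ha) hsb)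
    _ = a * b * Real.sinh (a + b) := by rw [Real.sinh_add]; ring

lemma sinh_add_mul_sinh_sub (x y : ℝ) :
    Real.sinh (x + y) * Real.sinh (x - y) = Real.sinh x ^ 2 - Real.sinh y ^ 2 := by
  rw [Real.sinh_add, Real.sinh_sub]
  linear_combination Real.sinh x ^ 2 * Real.cosh_sq y - Real.sinh y ^ 2 * Real.cosh_sq x

lemma mul_sinh_sq_sub_sinh_sq_le {x y : ℝ} (h : |y| ≤ x) :
    x * (Real.sinh x ^ 2 - Real.sinh y ^ 2) ≤ Real.sinh x * Real.cosh x * (x ^ 2 - y ^ 2) := by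
  obtain ⟨hl, hr⟩ := abs_le.1 h
  have key := add_mul_sinh_mul_sinh_le (a := x + y) (b := x - y) (by linarith) (by linarith)
  rw [sinh_add_mul_sinh_sub, show x + y + (x - y) = 2 * x by ring, Real.sinh_two_mul] at key
  linarith

lemma sq_le_mul_sin_sq {x : ℝ} (hx : |x| ≤ 1) : x ^ 2 ≤ 3 / 2 * Real.sin x ^ 2 := by
  have hsin : 5 / 6 * |x| ≤ Real.sin |x| := by
    rcases (abs_nonneg x).eq_or_lt with h0 | h0
    · simp [← h0]
    · have hcube : |x| ^ 3 ≤ |x| := pow_le_of_le_one h0.le hx three_ne_zero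
      linarith [Real.sin_gt_sub_cube h0]
  have hsq : (5 / 6 * |x|) ^ 2 ≤ Real.sin |x| ^ 2 := by gcongr
  rw [mul_pow, sq_abs, ← Real.abs_sin_eq_sin_abs_of_abs_le_pi (by linarith [Real.pi_gt_three]),
    sq_abs] at hsq
  linarith [sq_nonneg x]

lemma cosh_one_eq : Real.cosh 1 = (1 + Real.exp 1 ^ 2) / (2 * Real.exp 1) := by
  rw [Real.cosh_eq, Real.exp_neg]
  field_simp
  ring

lemma cosh_one_mem_Ioo : Real.cosh 1 ∈ Set.Ioo 1.54 1.55 := by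
  have hlo := Real.exp_one_gt_d9
  have hhi := Real.exp_one_lt_d9
  rw [cosh_one_eq, Set.mem_Ioo, lt_div_iff₀ (by positivity), div_lt_iff₀ (by positivity)]
  constructor <;> nlinarith

lemma sinh_one_sq_le_cosh_one : Real.sinh 1 ^ 2 ≤ Real.cosh 1 := by
  obtain ⟨hlo, hhi⟩ := cosh_one_mem_Ioo
  rw [Real.sinh_sq]
  nlinarith

lemma sinh_one_mul_cosh_one_le :
    3 / 2 * (Real.sinh 1 * Real.cosh 1) ≤ Real.sinh 1 ^ 2 + Real.cosh 1 := by
  obtain ⟨hlo, hhi⟩ := cosh_one_mem_Ioo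
  have hs : Real.sinh 1 < 1.19 := by
    refine lt_of_pow_lt_pow_left₀ 2 (by norm_num) ?_
    rw [Real.sinh_sq]
    nlinarith
  rw [Real.sinh_sq]
  nlinarith

lemma sin_sq_im_lt_half {ζ : ℂ}
    (h : (Real.sinh 1 ^ 2 + Real.cosh 1) * Real.sin ζ.im ^ 2 + Real.sinh ζ.re ^ 2
      < Real.sinh 1 ^ 2) :
    Real.sin ζ.im ^ 2 < 1 / 2 := by
  have hpos : 0 < Real.sinh 1 ^ 2 + Real.cosh 1 := by positivity
  refine lt_of_mul_lt_mul_left ?_ hpos.le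
  linarith [sq_nonneg (Real.sinh ζ.re), sinh_one_sq_le_cosh_one]

lemma norm_lt_one_of_sin_sq_add_sinh_sq_lt {ζ : ℂ} (him : |ζ.im| ≤ 1)
    (h : (Real.sinh 1 ^ 2 + Real.cosh 1) * Real.sin ζ.im ^ 2 + Real.sinh ζ.re ^ 2
      < Real.sinh 1 ^ 2) :
    ‖ζ‖ < 1 := by
  have hs : 0 < Real.sinh 1 := Real.sinh_pos_iff.2 one_pos
  have hre : |ζ.re| ≤ 1 := by
    have hsq : Real.sinh ζ.re ^ 2 < Real.sinh 1 ^ 2 := by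
      nlinarith [sq_nonneg (Real.sin ζ.im), Real.cosh_pos 1, sq_nonneg (Real.sinh 1)]
    have hsinh := abs_lt_of_sq_lt_sq hsq hs.le
    rw [Real.abs_sinh, Real.sinh_lt_sinh] at hsinh
    exact hsinh.le
  have hsc : 0 < Real.sinh 1 * Real.cosh 1 := by positivity
  have hsin : Real.sinh 1 * Real.cosh 1 * ζ.im ^ 2 < Real.sinh 1 * Real.cosh 1 * (1 - ζ.re ^ 2) :=
    calc Real.sinh 1 * Real.cosh 1 * ζ.im ^ 2
        ≤ Real.sinh 1 * Real.cosh 1 * (3 / 2 * Real.sin ζ.im ^ 2) := by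
          gcongr
          exact sq_le_mul_sin_sq him
      _ = 3 / 2 * (Real.sinh 1 * Real.cosh 1) * Real.sin ζ.im ^ 2 := by ring
      _ ≤ (Real.sinh 1 ^ 2 + Real.cosh 1) * Real.sin ζ.im ^ 2 := by
          gcongr
          exact sinh_one_mul_cosh_one_le
      _ < Real.sinh 1 ^ 2 - Real.sinh ζ.re ^ 2 := by linarith
      _ ≤ Real.sinh 1 * Real.cosh 1 * (1 - ζ.re ^ 2) := by
          simpa using mul_sinh_sq_sub_sinh_sq_le hre
  have hsq : ‖ζ‖ ^ 2 < 1 := by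
    rw [← normSq_eq_norm_sq, normSq_apply]
    linarith [lt_of_mul_lt_mul_left hsin hsc.le]
  exact (sq_lt_one_iff₀ (norm_nonneg ζ)).1 hsq

lemma tanh_log_div_two {q : ℂ} (hq : q ≠ 0) : tanh (log q / 2) = (q - 1) / (q + 1) := by
  have hsq : exp (log q / 2) ^ 2 = q := by
    rw [← exp_nat_mul, Nat.cast_ofNat, mul_div_cancel₀ _ two_ne_zero, exp_log hq]
  have hexp := exp_ne_zero (log q / 2)
  rw [tanh_eq_sinh_div_cosh, sinh, cosh, exp_neg, div_div_div_cancel_right₀ two_ne_zero,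
    ← mul_div_mul_left _ _ hexp, mul_sub, mul_add, mul_inv_cancel₀ hexp, ← sq, hsq]

lemma four_mul_norm_mul_sinh_sq_re_log_div_two {q : ℂ} (hq : q ≠ 0) :
    4 * ‖q‖ * Real.sinh (log q / 2).re ^ 2 = (1 - ‖q‖) ^ 2 := by
  have hq' : 0 < ‖q‖ := norm_pos_iff.2 hq
  have hcosh : Real.cosh (2 * (log q / 2).re) = (‖q‖ + ‖q‖⁻¹) / 2 := by
    rw [← Real.cosh_log hq', ← log_re, div_ofNat_re, mul_div_cancel₀ _ two_ne_zero]
  rw [Real.cosh_two_mul, Real.cosh_sq] at hcosh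
  field_simp at hcosh
  linarith

lemma norm_mul_one_sub_two_mul_sin_sq_im_log_div_two (q : ℂ) :
    ‖q‖ * (1 - 2 * Real.sin (log q / 2).im ^ 2) = q.re := by
  rw [div_ofNat_im, log_im, Real.sin_sq_eq_half_sub, mul_div_cancel₀ _ two_ne_zero]
  linear_combination norm_mul_cos_arg q

lemma four_mul_norm_mul_sin_sq_im_log_div_two (q : ℂ) :
    4 * ‖q‖ * Real.sin (log q / 2).im ^ 2 = (‖q‖ + 1) ^ 2 - ‖q + 1‖ ^ 2 := by
  have hnorm : ‖q + 1‖ ^ 2 = ‖q‖ ^ 2 + 1 + 2 * q.re := by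
    simp [Complex.sq_norm, normSq_add]
  linear_combination -2 * norm_mul_one_sub_two_mul_sin_sq_im_log_div_two q + hnorm

lemma div_two_sub_add_one {x : ℂ} (hx : 2 - x ≠ 0) : x / (2 - x) + 1 = 2 / (2 - x) := by
  field_simp
  ring

/-- The inverse branch of `Bean` on the right half-plane, that is `artanh (w ^ 2 - 1)` written with
the principal logarithm. -/
noncomputable def beanInv (w : ℂ) : ℂ := log (w ^ 2 / (2 - w ^ 2)) / 2

lemma beanInv_one : beanInv 1 = 0 := by
  norm_num [beanInv]

lemma analyticAt_beanInv {w : ℂ} (hw : 2 - w ^ 2 ≠ 0) (hre : 0 < (w ^ 2 / (2 - w ^ 2)).re) :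
    AnalyticAt ℂ beanInv w := by
  have hsq : AnalyticAt ℂ (fun w : ℂ ↦ w ^ 2) w := analyticAt_id.pow 2
  exact ((hsq.div (analyticAt_const.sub hsq) hw).clog (Or.inl hre)).div analyticAt_const two_ne_zero

lemma bean_beanInv {w : ℂ} (hre : 0 < w.re) (hw : 2 - w ^ 2 ≠ 0) : Bean (beanInv w) = w := by
  have hw0 := ne_zero_of_re_pos hre
  have hsq : 1 + tanh (beanInv w) = w ^ 2 := by
    rw [beanInv, tanh_log_div_two (div_ne_zero (pow_ne_zero 2 hw0) hw), div_two_sub_add_one hw]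
    field_simp
    ring
  rw [Bean, hsq, one_div, sq_cpow_two_inv hre]

lemma eight_mul_re_sq (w : ℂ) : 8 * w.re ^ 2 = (‖w‖ ^ 2 + 2) ^ 2 - ‖2 - w ^ 2‖ ^ 2 := by
  rw [Complex.sq_norm, Complex.sq_norm, normSq_apply, normSq_apply]
  simp only [sub_re, sub_im, pow_two, mul_re, mul_im, re_ofNat, im_ofNat]
  ring

lemma two_le_norm_sq_add (w : ℂ) : 2 ≤ ‖w‖ ^ 2 + ‖2 - w ^ 2‖ := by
  have h := norm_add_le (w ^ 2) (2 - w ^ 2)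
  rwa [add_sub_cancel, norm_ofNat, norm_pow] at h

lemma four_mul_sinh_sq_re_beanInv {w : ℂ} (hw0 : w ≠ 0) (hw : 2 - w ^ 2 ≠ 0) :
    4 * (‖w‖ ^ 2 * ‖2 - w ^ 2‖) * Real.sinh (beanInv w).re ^ 2
      = (‖w‖ ^ 2 - ‖2 - w ^ 2‖) ^ 2 := by
  have h := four_mul_norm_mul_sinh_sq_re_log_div_two (div_ne_zero (pow_ne_zero 2 hw0) hw)
  have hQ : ‖2 - w ^ 2‖ ≠ 0 := norm_ne_zero_iff.2 hw
  rw [norm_div, norm_pow, ← beanInv] at h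
  field_simp at h
  linear_combination h

lemma four_mul_sin_sq_im_beanInv {w : ℂ} (hw : 2 - w ^ 2 ≠ 0) :
    4 * (‖w‖ ^ 2 * ‖2 - w ^ 2‖) * Real.sin (beanInv w).im ^ 2
      = (‖w‖ ^ 2 + ‖2 - w ^ 2‖) ^ 2 - 4 := by
  have h := four_mul_norm_mul_sin_sq_im_log_div_two (w ^ 2 / (2 - w ^ 2))
  have hQ : ‖2 - w ^ 2‖ ≠ 0 := norm_ne_zero_iff.2 hw
  rw [div_two_sub_add_one hw, norm_div, norm_div, norm_pow, norm_ofNat, ← beanInv] at h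
  field_simp at h
  linear_combination h

/-- The midpoint of `Bean (-1) = 2 / √(2 * (1 + e ^ 2))` and `Bean 1 = 2 * e / √(2 * (1 + e ^ 2))`,
which is the centre of `beanDisk`. -/
noncomputable def beanCenter : ℝ := (1 + Real.exp 1) / √(2 * (1 + Real.exp 1 ^ 2))

/-- Half the distance between `Bean (-1)` and `Bean 1`, which is the radius of `beanDisk`. -/
noncomputable def beanRadius : ℝ := (Real.exp 1 - 1) / √(2 * (1 + Real.exp 1 ^ 2))

/-- The disk with the segment from `Bean (-1)` to `Bean 1` as a diameter; it is contained in the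
image of the unit disk under `Bean`. -/
def beanDisk : Set ℂ := ball (beanCenter : ℂ) beanRadius

lemma beanCenter_pos : 0 < beanCenter := by
  unfold beanCenter
  positivity

lemma two_mul_beanCenter_sq_mul_cosh_one :
    2 * beanCenter ^ 2 * Real.cosh 1 = Real.cosh 1 + 1 := by
  rw [beanCenter, div_pow, Real.sq_sqrt (by positivity), cosh_one_eq]
  field_simp
  ring

lemma beanCenter_sq_sub_beanRadius_sq_mul_cosh_one :
    (beanCenter ^ 2 - beanRadius ^ 2) * Real.cosh 1 = 1 := by
  rw [beanCenter, beanRadius, div_pow, div_pow, Real.sq_sqrt (by positivity), cosh_one_eq]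
  field_simp
  ring

lemma cosh_one_mul_norm_sq_add_one_lt {w : ℂ} (hw : w ∈ beanDisk) :
    Real.cosh 1 * ‖w‖ ^ 2 + 1 < 2 * beanCenter * Real.cosh 1 * w.re := by
  have hdist : ‖w - beanCenter‖ ^ 2 < beanRadius ^ 2 := by
    have h := mem_ball_iff_norm.1 hw
    gcongr
  have hexpand : ‖w - beanCenter‖ ^ 2 = ‖w‖ ^ 2 + beanCenter ^ 2 - 2 * beanCenter * w.re := by
    rw [Complex.sq_norm, Complex.sq_norm, normSq_sub, normSq_ofReal, conj_ofReal, re_mul_ofReal]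
    ring
  rw [hexpand] at hdist
  linear_combination Real.cosh 1 * hdist - beanCenter_sq_sub_beanRadius_sq_mul_cosh_one

lemma re_pos_of_mem_beanDisk {w : ℂ} (hw : w ∈ beanDisk) : 0 < w.re := by
  have hpos : 0 < 2 * beanCenter * Real.cosh 1 * w.re :=
    lt_trans (by positivity) (cosh_one_mul_norm_sq_add_one_lt hw)
  exact pos_of_mul_pos_right hpos (mul_pos (mul_pos two_pos beanCenter_pos) (Real.cosh_pos 1)).le

lemma cosh_one_mul_norm_sq_add_one_sq_lt {w : ℂ} (hw : w ∈ beanDisk) :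
    4 * (Real.cosh 1 * ‖w‖ ^ 2 + 1) ^ 2
      < Real.cosh 1 * (Real.cosh 1 + 1) * ((‖w‖ ^ 2 + 2) ^ 2 - ‖2 - w ^ 2‖ ^ 2) := by
  have h : (Real.cosh 1 * ‖w‖ ^ 2 + 1) ^ 2 < (2 * beanCenter * Real.cosh 1 * w.re) ^ 2 := by
    gcongr
    exact cosh_one_mul_norm_sq_add_one_lt hw
  rw [← eight_mul_re_sq]
  linear_combination 4 * h
    + 8 * Real.cosh 1 * w.re ^ 2 * two_mul_beanCenter_sq_mul_cosh_one

lemma mul_norm_sq_add_norm_sq_lt {w : ℂ} (hw : w ∈ beanDisk) :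
    Real.cosh 1 * (Real.cosh 1 + 1) * (‖w‖ ^ 2 + ‖2 - w ^ 2‖) ^ 2
      < 4 * Real.cosh 1 ^ 2 * (‖w‖ ^ 2 * ‖2 - w ^ 2‖)
        + 4 * (Real.cosh 1 ^ 2 + Real.cosh 1 - 1) := by
  have hslack : 0 ≤ Real.cosh 1 * (Real.cosh 1 - 1) * ‖w‖ ^ 2
      * (‖w‖ ^ 2 + ‖2 - w ^ 2‖ - 2) := by
    have hcosh : 0 ≤ Real.cosh 1 - 1 := sub_nonneg.2 (Real.one_le_cosh 1)
    have htriangle := sub_nonneg.2 (two_le_norm_sq_add w)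
    positivity
  linear_combination cosh_one_mul_norm_sq_add_one_sq_lt hw + 2 * hslack

lemma two_sub_sq_ne_zero_of_mem_beanDisk {w : ℂ} (hw : w ∈ beanDisk) : 2 - w ^ 2 ≠ 0 := by
  intro hzero
  have hnorm : ‖w‖ ^ 2 = 2 := by
    rw [← norm_pow, ← sub_eq_zero.1 hzero, norm_ofNat]
  have h := mul_norm_sq_add_norm_sq_lt hw
  rw [hzero, hnorm, norm_zero] at h
  linarith

lemma sin_sq_add_sinh_sq_beanInv_lt {w : ℂ} (hw : w ∈ beanDisk) :
    (Real.sinh 1 ^ 2 + Real.cosh 1) * Real.sin (beanInv w).im ^ 2 + Real.sinh (beanInv w).re ^ 2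
      < Real.sinh 1 ^ 2 := by
  have hw0 := ne_zero_of_re_pos (re_pos_of_mem_beanDisk hw)
  have hw2 := two_sub_sq_ne_zero_of_mem_beanDisk hw
  have hscale : 0 < 4 * (‖w‖ ^ 2 * ‖2 - w ^ 2‖) := by positivity
  refine lt_of_mul_lt_mul_left ?_ hscale.le
  rw [Real.sinh_sq 1]
  linear_combination mul_norm_sq_add_norm_sq_lt hw + four_mul_sinh_sq_re_beanInv hw0 hw2
    + (Real.cosh 1 ^ 2 + Real.cosh 1 - 1) * four_mul_sin_sq_im_beanInv hw2

lemma re_sq_div_two_sub_sq_pos {w : ℂ} (hw : w ∈ beanDisk) :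
    0 < (w ^ 2 / (2 - w ^ 2)).re := by
  have hw0 := ne_zero_of_re_pos (re_pos_of_mem_beanDisk hw)
  have hq : 0 < ‖w ^ 2 / (2 - w ^ 2)‖ :=
    norm_pos_iff.2 (div_ne_zero (pow_ne_zero 2 hw0) (two_sub_sq_ne_zero_of_mem_beanDisk hw))
  rw [← norm_mul_one_sub_two_mul_sin_sq_im_log_div_two, ← beanInv]
  exact mul_pos hq (by linarith [sin_sq_im_lt_half (sin_sq_add_sinh_sq_beanInv_lt hw)])

lemma norm_beanInv_lt_one {w : ℂ} (hw : w ∈ beanDisk) : ‖beanInv w‖ < 1 := by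
  refine norm_lt_one_of_sin_sq_add_sinh_sq_lt ?_ (sin_sq_add_sinh_sq_beanInv_lt hw)
  have harg := abs_arg_lt_pi_div_two_iff.2 (Or.inl (re_sq_div_two_sub_sq_pos hw))
  rw [beanInv, div_ofNat_im, log_im, abs_div, abs_two]
  linarith [Real.pi_lt_four]

lemma norm_add_lt_norm_one_add_conj_mul {a z : ℂ} (ha : ‖a‖ < 1) (hz : ‖z‖ < 1) :
    ‖a + z‖ < ‖1 + starRingEnd ℂ a * z‖ := by
  have hdiff : ‖1 + starRingEnd ℂ a * z‖ ^ 2 - ‖a + z‖ ^ 2 = (1 - ‖a‖ ^ 2) * (1 - ‖z‖ ^ 2) := by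
    simp only [Complex.sq_norm, normSq_apply, add_re, add_im, one_re, one_im, mul_re, mul_im,
      conj_re, conj_im]
    ring
  have hpos : 0 < (1 - ‖a‖ ^ 2) * (1 - ‖z‖ ^ 2) :=
    mul_pos (sub_pos.2 ((sq_lt_one_iff₀ (norm_nonneg a)).2 ha))
      (sub_pos.2 ((sq_lt_one_iff₀ (norm_nonneg z)).2 hz))
  exact lt_of_pow_lt_pow_left₀ 2 (norm_nonneg _) (by linarith)

lemma janowski_mem_ball {A B : ℝ} {z : ℂ} (hB : |B| < 1) (hBA : B < A) (hz : ‖z‖ < 1) :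
    (1 + (A : ℂ) * z) / (1 + (B : ℂ) * z) ∈
      ball (((1 - A * B) / (1 - B ^ 2) : ℝ) : ℂ) ((A - B) / (1 - B ^ 2)) := by
  have hnorm : ‖(B : ℂ) + z‖ < ‖1 + (B : ℂ) * z‖ := by
    simpa only [conj_ofReal] using norm_add_lt_norm_one_add_conj_mul (a := B)
      (by rwa [norm_real]) hz
  have hden : 0 < ‖1 + (B : ℂ) * z‖ := (norm_nonneg _).trans_lt hnorm
  have hden0 : 1 + (B : ℂ) * z ≠ 0 := norm_pos_iff.1 hden
  have hB2 : 0 < 1 - B ^ 2 := sub_pos.2 ((sq_lt_one_iff_abs_lt_one B).2 hB)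
  have hrad : 0 < (A - B) / (1 - B ^ 2) := div_pos (sub_pos.2 hBA) hB2
  have hmoebius : (1 + (A : ℂ) * z) / (1 + (B : ℂ) * z) - ((1 - A * B) / (1 - B ^ 2) : ℝ)
      = ((A - B) / (1 - B ^ 2) : ℝ) * ((B + z) / (1 + B * z)) := by
    have hB2' : (1 : ℂ) - B ^ 2 ≠ 0 := by exact_mod_cast hB2.ne'
    push_cast
    rw [div_sub_div _ _ hden0 hB2', div_mul_div_comm, div_eq_div_iff (mul_ne_zero hden0 hB2')
      (mul_ne_zero hB2' hden0)]
    ring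
  rw [mem_ball_iff_norm, hmoebius, norm_mul, Complex.norm_of_nonneg hrad.le, norm_div]
  exact mul_lt_of_lt_one_right hrad ((div_lt_one hden).2 hnorm)

lemma ball_ofReal_subset_ball_ofReal {x y ρ r : ℝ} (hleft : x ≤ y → y - r ≤ x - ρ)
    (hright : y ≤ x → x + ρ ≤ y + r) : ball (x : ℂ) ρ ⊆ ball (y : ℂ) r := by
  refine ball_subset_ball' ?_
  rw [dist_eq_norm, ← ofReal_sub, norm_real, Real.norm_eq_abs]
  rcases le_total x y with h | h
  · rw [abs_of_nonpos (sub_nonpos.2 h)]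
    linarith [hleft h]
  · rw [abs_of_nonneg (sub_nonneg.2 h)]
    linarith [hright h]

lemma sqrt_two_div (x : ℝ) : √(2 / x) = 2 / √(2 * x) := by
  rw [← mul_div_mul_left 2 x two_ne_zero, Real.sqrt_div (by norm_num),
    Real.sqrt_mul_self two_pos.le]

lemma beanCenter_sub_beanRadius : beanCenter - beanRadius = √(2 / (1 + Real.exp 1 ^ 2)) := by
  rw [sqrt_two_div, beanCenter, beanRadius]
  ring

lemma beanCenter_add_beanRadius :
    beanCenter + beanRadius = Real.exp 1 * √(2 / (1 + Real.exp 1 ^ 2)) := by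
  rw [sqrt_two_div, beanCenter, beanRadius]
  ring

lemma janowski_ball_subset_beanDisk {A B : ℝ} (hB : |B| < 1)
    (hleft : (1 - A * B) / (1 - B ^ 2) ≤ beanCenter →
      A ≤ 1 - (beanCenter - beanRadius) * (1 - B))
    (hright : beanCenter ≤ (1 - A * B) / (1 - B ^ 2) →
      A ≤ (beanCenter + beanRadius) * (1 + B) - 1) :
    ball (((1 - A * B) / (1 - B ^ 2) : ℝ) : ℂ) ((A - B) / (1 - B ^ 2)) ⊆ beanDisk := by
  obtain ⟨hB1, hB2⟩ := abs_lt.1 hB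
  have hpos : 0 < 1 + B := by linarith
  have hpos' : 0 < 1 - B := by linarith
  have hfactor : 1 - B ^ 2 = (1 - B) * (1 + B) := by ring
  have hmin : (1 - A * B) / (1 - B ^ 2) - (A - B) / (1 - B ^ 2) = (1 - A) / (1 - B) := by
    rw [hfactor]
    field_simp
    ring
  have hmax : (1 - A * B) / (1 - B ^ 2) + (A - B) / (1 - B ^ 2) = (1 + A) / (1 + B) := by
    rw [hfactor]
    field_simp
    ring
  refine ball_ofReal_subset_ball_ofReal (fun h ↦ ?_) (fun h ↦ ?_)
  · rw [hmin, le_div_iff₀ hpos']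
    linarith [hleft h]
  · rw [hmax, div_le_iff₀ hpos]
    linarith [hright h]

lemma subord_of_rightInverse {p g h : ℂ → ℂ} {Ω : Set ℂ} (hp : AnalyticOnNhd ℂ p unitDisk)
    (hpΩ : Set.MapsTo p unitDisk Ω) (hh : AnalyticOnNhd ℂ h Ω) (h0 : h (p 0) = 0)
    (hlt : ∀ w ∈ Ω, ‖h w‖ < 1) (hgh : ∀ w ∈ Ω, g (h w) = w) : Subord p g :=
  ⟨h ∘ p, hh.comp hp hpΩ, h0, fun _ hz ↦ hlt _ (hpΩ hz), fun _ hz ↦ (hgh _ (hpΩ hz)).symm⟩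

/-- under the stated conditions on A, B, subordination to the Janowski
function implies subordination to 𝔅 (i.e. 𝒮*[A,B] ⊂ 𝒮*_𝔅). -/
theorem janowskiClassSubsetBean (A B : ℝ) (hB : -1 < B) (hBA : B < A) (hA : A ≤ 1)
    (hcond1 : (1 - A*B) / (1 - B^2) ≤ (1 + Real.exp 1) / Real.sqrt (2 * (1 + Real.exp 1 ^ 2)) →
      A ≤ 1 - Real.sqrt (2 / (1 + Real.exp 1 ^ 2)) * (1 - B))
    (hcond2 : (1 + Real.exp 1) / Real.sqrt (2 * (1 + Real.exp 1 ^ 2)) ≤ (1 - A*B) / (1 - B^2) →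
      A ≤ Real.exp 1 * Real.sqrt (2 / (1 + Real.exp 1 ^ 2)) * (1 + B) - 1)
    (p : ℂ → ℂ) (hp : AnalyticOnNhd ℂ p unitDisk)
    (hsub : Subord p (fun z => (1 + (A:ℂ)*z) / (1 + (B:ℂ)*z))) :
    Subord p Bean := by
  obtain ⟨ω, -, hω0, hω, hpω⟩ := hsub
  have hB1 : |B| < 1 := abs_lt.2 ⟨hB, hBA.trans_le hA⟩
  rw [← beanCenter_sub_beanRadius] at hcond1
  rw [← beanCenter_add_beanRadius] at hcond2
  have hpdisk : Set.MapsTo p unitDisk beanDisk := fun z hz ↦ by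
    rw [hpω z hz]
    exact janowski_ball_subset_beanDisk hB1 hcond1 hcond2 (janowski_mem_ball hB1 hBA (hω z hz))
  have hp0 : p 0 = 1 := by simp [hpω 0 (mem_ball_self one_pos), hω0]
  exact subord_of_rightInverse hp hpdisk
    (fun w hw ↦ analyticAt_beanInv (two_sub_sq_ne_zero_of_mem_beanDisk hw)
      (re_sq_div_two_sub_sq_pos hw))
    (hp0 ▸ beanInv_one) (fun w hw ↦ norm_beanInv_lt_one hw)
    (fun w hw ↦ bean_beanInv (re_pos_of_mem_beanDisk hw) (two_sub_sq_ne_zero_of_mem_beanDisk hw))
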